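/- Fix γ > 0 and d ∈ (0,1). Define the tilted truncated law p̃(z) = e^{μz}·p(z)·1_{|z| ≤ γx}/m₀, where Λ = 1/(n·F̄(x)), μ = (log Λ)/(γx) and m₀ = Σ_{|z| ≤ γx} e^{μz}·p(z), and let σ̃² be the variance of p̃ and ν̃ its centered third absolute moment. Then there exist constants c₁, c₂, c₃, c₄ > 0, an integer n₀ and a real θ₀ > 0 such that for all n ≥ n₀ and integers x ≥ θ₀·aₙ: c₁·x² ≥ n·σ̃² ≥ c₂·x²/Λ^d and c₃·x³ ≥ n·ν̃ ≥ c₄·x³/Λ^d. -/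

import Mathlib

/-!
Write `y = γx`, so that `exp (μ y) = Λ`, and take `x` so large that `Λ ≥ 1`; this holds for
`x ≥ 2 aₙ` because `n F̄(x) ≤ n H(2 aₙ) → 2 ^ (-α) < 1`.

*Upper bounds.* On `|z| ≤ y` the tilt is at most `Λ`, and `m₀` is bounded below by a single atom
`p z₀` with `z₀ > 0`. Hence `n σ̃²` is at most a constant times `n Λ ∑_{|z| ≤ y} z² p z`, and the
truncated second moment is `O(y² H(y))` since `α < 2` (`truncated_second_moment`, a dyadic
induction). As `n Λ F̄(x) = 1`, this is `O(x²)`. The third moment follows from `|z - m̃| ≤ 2 y`.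

*Lower bounds.* Let `ε = d / 4`. Splitting at `ε y` gives `m₀ ≤ Λ ^ ε + Λ F̄(ε y) = O(Λ ^ ε)`
(`tiltM0_le`). The blocks `((1 - ε) y, y]` and `((1 - 3ε) y, (1 - 2ε) y]` are at distance `ε y`, so
whatever the mean `m̃` is, all points of one of them are at distance at least `ε y / 2` from it. That
block has `p`-mass of order `F̄(x)` and its tilt is at least `Λ ^ (1 - 3ε)`; this gives
`n σ̃² ≥ c x² n F̄(x) Λ ^ (1 - 4ε) = c x² / Λ ^ d`, and likewise for `ν̃` (`moment_lower`). No
information on `m̃` is needed.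
-/

open Filter Topology

/-- `FbarZ p x = P(X > x)`, the right tail of a ℤ-valued step distribution with pmf `p`. -/
noncomputable def FbarZ (p : ℤ → ℝ) (x : ℝ) : ℝ := ∑' z : ℤ, if x < (z : ℝ) then p z else 0

/-- `HZ p x = P(|X| > x)`, the two-sided tail. -/
noncomputable def HZ (p : ℤ → ℝ) (x : ℝ) : ℝ := ∑' z : ℤ, if x < |(z : ℝ)| then p z else 0

/-- `Λ = 1/(n·F̄(x))`. -/
noncomputable def tiltLambda (p : ℤ → ℝ) (n : ℕ) (x : ℤ) : ℝ :=
  1 / ((n : ℝ) * FbarZ p (x : ℝ))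

/-- `μ = log Λ / (γx)`. -/
noncomputable def tiltMu (p : ℤ → ℝ) (γ : ℝ) (n : ℕ) (x : ℤ) : ℝ :=
  Real.log (tiltLambda p n x) / (γ * (x : ℝ))

/-- `m₀ = Σ_{|z| ≤ γx} e^{μz}·p(z)`, the tilted truncated total mass. -/
noncomputable def tiltM0 (p : ℤ → ℝ) (γ : ℝ) (n : ℕ) (x : ℤ) : ℝ :=
  ∑' z : ℤ, if |(z : ℝ)| ≤ γ * (x : ℝ) then Real.exp (tiltMu p γ n x * (z : ℝ)) * p z else 0

/-- The tilted truncated law `p̃(z) = e^{μz}·p(z)·1_{|z| ≤ γx}/m₀`. -/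
noncomputable def tiltPmf (p : ℤ → ℝ) (γ : ℝ) (n : ℕ) (x : ℤ) (z : ℤ) : ℝ :=
  if |(z : ℝ)| ≤ γ * (x : ℝ) then
    Real.exp (tiltMu p γ n x * (z : ℝ)) * p z / tiltM0 p γ n x else 0

/-- The mean of the tilted truncated law. -/
noncomputable def tiltMean (p : ℤ → ℝ) (γ : ℝ) (n : ℕ) (x : ℤ) : ℝ :=
  ∑' z : ℤ, (z : ℝ) * tiltPmf p γ n x z

/-- `σ̃²`, the variance of the tilted truncated law. -/
noncomputable def tiltVar (p : ℤ → ℝ) (γ : ℝ) (n : ℕ) (x : ℤ) : ℝ :=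
  ∑' z : ℤ, ((z : ℝ) - tiltMean p γ n x) ^ 2 * tiltPmf p γ n x z

/-- `ν̃`, the centered third absolute moment of the tilted truncated law. -/
noncomputable def tiltThird (p : ℤ → ℝ) (γ : ℝ) (n : ℕ) (x : ℤ) : ℝ :=
  ∑' z : ℤ, |(z : ℝ) - tiltMean p γ n x| ^ 3 * tiltPmf p γ n x z

/-! ### Tails and finite truncations -/

/-- The integers `z` with `|z| ≤ y`. -/
noncomputable def truncSet (y : ℝ) : Finset ℤ := Finset.Icc (-⌊y⌋) ⌊y⌋

lemma mem_truncSet {y : ℝ} {z : ℤ} : z ∈ truncSet y ↔ |(z : ℝ)| ≤ y := by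
  unfold truncSet
  rw [Finset.mem_Icc, abs_le, neg_le, Int.le_floor, Int.le_floor]
  push_cast
  constructor <;> rintro ⟨h1, h2⟩ <;> constructor <;> linarith

lemma summable_ite {p : ℤ → ℝ} (hp0 : ∀ z, 0 ≤ p z) (hp1 : HasSum p 1) (P : ℤ → Prop)
    [DecidablePred P] : Summable (fun z => if P z then p z else 0) :=
  Summable.of_nonneg_of_le (fun z => by split_ifs <;> simp [hp0])
    (fun z => by split_ifs <;> simp [hp0]) hp1.summable

lemma HZ_antitone {p : ℤ → ℝ} (hp0 : ∀ z, 0 ≤ p z) (hp1 : HasSum p 1) : Antitone (HZ p) := by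
  intro u v huv
  refine Summable.tsum_le_tsum (fun z => ?_) (summable_ite hp0 hp1 _) (summable_ite hp0 hp1 _)
  by_cases h : v < |(z : ℝ)|
  · rw [if_pos h, if_pos (huv.trans_lt h)]
  · rw [if_neg h]; split_ifs <;> simp [hp0]

lemma HZ_nonneg {p : ℤ → ℝ} (hp0 : ∀ z, 0 ≤ p z) (y : ℝ) : 0 ≤ HZ p y :=
  tsum_nonneg fun z => by split_ifs <;> simp [hp0]

lemma FbarZ_le_HZ {p : ℤ → ℝ} (hp0 : ∀ z, 0 ≤ p z) (hp1 : HasSum p 1) (y : ℝ) :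
    FbarZ p y ≤ HZ p y := by
  refine Summable.tsum_le_tsum (fun z => ?_) (summable_ite hp0 hp1 _) (summable_ite hp0 hp1 _)
  by_cases h : y < (z : ℝ)
  · rw [if_pos h, if_pos (h.trans_le (le_abs_self _))]
  · rw [if_neg h]; split_ifs <;> simp [hp0]

lemma FbarZ_sub {p : ℤ → ℝ} (hp0 : ∀ z, 0 ≤ p z) (hp1 : HasSum p 1) {u v y : ℝ}
    (hu : 0 ≤ u) (huv : u ≤ v) (hv : v ≤ y) :
    FbarZ p u - FbarZ p v = ∑ z ∈ (truncSet y).filter (fun z : ℤ => u < (z : ℝ) ∧ (z : ℝ) ≤ v),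
      p z := by
  unfold FbarZ
  rw [← Summable.tsum_sub (summable_ite hp0 hp1 _) (summable_ite hp0 hp1 _), Finset.sum_filter,
    tsum_eq_sum (s := truncSet y)]
  · refine Finset.sum_congr rfl fun z _ => ?_
    by_cases h1 : u < (z : ℝ) <;> by_cases h2 : v < (z : ℝ)
    · simp [h1, h2]
    · simp [h1, h2, not_lt.1 h2]
    · exact absurd (huv.trans_lt h2) h1
    · simp [h1, h2]
  · intro z hz
    rw [mem_truncSet] at hz
    by_cases h1 : u < (z : ℝ)
    · rw [abs_of_pos (hu.trans_lt h1)] at hz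
      simp [h1, hv.trans_lt (not_le.1 hz)]
    · have h2 : ¬ v < (z : ℝ) := fun h => h1 (huv.trans_lt h)
      simp [h1, h2]

lemma sum_filter_le_FbarZ {p : ℤ → ℝ} (hp0 : ∀ z, 0 ≤ p z) (hp1 : HasSum p 1) (u : ℝ)
    (s : Finset ℤ) : ∑ z ∈ s.filter (fun z : ℤ => u < (z : ℝ)), p z ≤ FbarZ p u := by
  rw [Finset.sum_filter]
  exact (summable_ite hp0 hp1 _).sum_le_tsum s fun z _ => by split_ifs <;> simp [hp0]

lemma sum_filter_le_HZ {p : ℤ → ℝ} (hp0 : ∀ z, 0 ≤ p z) (hp1 : HasSum p 1) (u : ℝ)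
    (s : Finset ℤ) : ∑ z ∈ s.filter (fun z : ℤ => u < |(z : ℝ)|), p z ≤ HZ p u := by
  rw [Finset.sum_filter]
  exact (summable_ite hp0 hp1 _).sum_le_tsum s fun z _ => by split_ifs <;> simp [hp0]

lemma HZ_pos {p : ℤ → ℝ} (hp0 : ∀ z, 0 ≤ p z) (hp1 : HasSum p 1) {α : ℝ}
    (hH : ∀ l : ℝ, 0 < l →
      Tendsto (fun x : ℝ => HZ p (l * x) / HZ p x) atTop (nhds (l ^ (-α)))) (y : ℝ) :
    0 < HZ p y := by
  by_contra h
  -- A vanishing tail stays zero, so the ratio below is the junk value `0 / 0 = 0`.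
  have h0 : Tendsto (fun x : ℝ => HZ p (1 * x) / HZ p x) atTop (nhds 0) := by
    refine tendsto_const_nhds.congr' ?_
    filter_upwards [eventually_ge_atTop y] with x hx
    have : HZ p x = 0 :=
      le_antisymm ((HZ_antitone hp0 hp1 hx).trans (not_lt.1 h)) (HZ_nonneg hp0 x)
    simp [this]
  have := tendsto_nhds_unique h0 (hH 1 one_pos)
  simp at this

/-- Karamata-type bound. Halving `y` multiplies `y² H(y)` by a factor tending to `2 ^ α / 4 < 1`,
so the contributions of the dyadic shells are dominated by a convergent geometric series. -/
lemma truncated_second_moment {p : ℤ → ℝ} (hp0 : ∀ z, 0 ≤ p z) (hp1 : HasSum p 1) {α : ℝ}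
    (hα2 : α < 2)
    (hH : ∀ l : ℝ, 0 < l →
      Tendsto (fun x : ℝ => HZ p (l * x) / HZ p x) atTop (nhds (l ^ (-α)))) :
    ∃ C : ℝ, 0 < C ∧ ∀ᶠ y : ℝ in atTop,
      ∑ z ∈ truncSet y, (z : ℝ) ^ 2 * p z ≤ C * y ^ 2 * HZ p y := by
  have hHpos := HZ_pos hp0 hp1 hH
  have hlim : ((1 / 2 : ℝ)) ^ (-α) < 4 := by
    rw [Real.rpow_neg (by norm_num), one_div, Real.inv_rpow (by norm_num), inv_inv]
    calc (2 : ℝ) ^ α < 2 ^ (2 : ℝ) := Real.rpow_lt_rpow_of_exponent_lt (by norm_num) hα2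
      _ = 4 := by norm_num
  obtain ⟨ρ, hρ1, hρ4⟩ := exists_between hlim
  have hρ0 : 0 < ρ := lt_trans (by positivity) hρ1
  obtain ⟨y₁, hy₁⟩ := eventually_atTop.1
    (((hH (1 / 2) (by norm_num)).eventually_lt_const hρ1).and (eventually_ge_atTop 1))
  obtain ⟨y₀, hy₀⟩ : ∃ y₀, y₀ = max y₁ 1 := ⟨_, rfl⟩
  have hy₀1 : 1 ≤ y₀ := hy₀ ▸ le_max_right _ _
  have hratio : ∀ y, y₀ ≤ y → HZ p (y / 2) ≤ ρ * HZ p y := by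
    intro y hy
    have := (hy₁ y ((le_max_left _ _).trans (hy₀ ▸ hy))).1
    rw [div_lt_iff₀ (hHpos y), one_div_mul_eq_div] at this
    exact this.le
  set V : ℝ → ℝ := fun y => ∑ z ∈ truncSet y, (z : ℝ) ^ 2 * p z with hV
  have hVnn : ∀ y, 0 ≤ V y := fun y => Finset.sum_nonneg fun z _ => mul_nonneg (sq_nonneg _) (hp0 z)
  have hVmono : ∀ u v, u ≤ v → V u ≤ V v := fun u v huv =>
    Finset.sum_le_sum_of_subset_of_nonneg
      (fun z hz => mem_truncSet.2 ((mem_truncSet.1 hz).trans huv))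
      (fun z _ _ => mul_nonneg (sq_nonneg _) (hp0 z))
  have hstep : ∀ y, 0 ≤ y → V y ≤ V (y / 2) + y ^ 2 * HZ p (y / 2) := by
    intro y hy
    have hsplit := Finset.sum_filter_add_sum_filter_not (truncSet y)
      (fun z : ℤ => y / 2 < |(z : ℝ)|) (fun z => (z : ℝ) ^ 2 * p z)
    have hA : ∑ z ∈ (truncSet y).filter (fun z : ℤ => y / 2 < |(z : ℝ)|), (z : ℝ) ^ 2 * p z
        ≤ y ^ 2 * HZ p (y / 2) := by
      refine le_trans ?_ (mul_le_mul_of_nonneg_left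
        (sum_filter_le_HZ hp0 hp1 (y / 2) (truncSet y)) (sq_nonneg y))
      rw [Finset.mul_sum]
      refine Finset.sum_le_sum fun z hz => mul_le_mul_of_nonneg_right ?_ (hp0 z)
      have := mem_truncSet.1 (Finset.mem_filter.1 hz).1
      exact sq_le_sq.2 (by rwa [abs_of_nonneg hy])
    have hB : ∑ z ∈ (truncSet y).filter (fun z : ℤ => ¬ y / 2 < |(z : ℝ)|), (z : ℝ) ^ 2 * p z
        ≤ V (y / 2) :=
      Finset.sum_le_sum_of_subset_of_nonneg
        (fun z hz => mem_truncSet.2 (not_lt.1 (Finset.mem_filter.1 hz).2))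
        (fun z _ _ => mul_nonneg (sq_nonneg _) (hp0 z))
    simp only [hV] at *
    linarith
  -- The first term makes the induction step close, the second one covers `[y₀, 2 y₀]`.
  obtain ⟨C, hC⟩ : ∃ C, C = ρ / (1 - ρ / 4) + V (2 * y₀) / HZ p (2 * y₀) := ⟨_, rfl⟩
  have h4 : 0 < 1 - ρ / 4 := by linarith
  have hC1 : ρ / (1 - ρ / 4) ≤ C := by
    rw [hC]; exact le_add_of_nonneg_right (div_nonneg (hVnn _) (hHpos _).le)
  have hC2 : V (2 * y₀) / HZ p (2 * y₀) ≤ C := by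
    rw [hC]; exact le_add_of_nonneg_left (by positivity)
  have hC0 : 0 < C := lt_of_lt_of_le (by positivity) hC1
  have hind : ∀ k : ℕ, ∀ y, y₀ ≤ y → y ≤ 2 ^ (k + 1) * y₀ → V y ≤ C * y ^ 2 * HZ p y := by
    intro k
    induction k with
    | zero =>
      intro y hy hy2
      have hy2' : y ≤ 2 * y₀ := by simpa using hy2
      have h1 : V (2 * y₀) ≤ C * HZ p (2 * y₀) := (div_le_iff₀ (hHpos _)).1 hC2
      have hy1 : 1 ≤ y ^ 2 := one_le_pow₀ (hy₀1.trans hy)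
      calc V y ≤ V (2 * y₀) := hVmono _ _ hy2'
        _ ≤ C * HZ p (2 * y₀) := h1
        _ ≤ C * HZ p y := mul_le_mul_of_nonneg_left (HZ_antitone hp0 hp1 hy2') hC0.le
        _ ≤ C * y ^ 2 * HZ p y := by
          have := mul_nonneg hC0.le (hHpos y).le
          nlinarith
    | succ k ih =>
      intro y hy hy2
      by_cases hc : y ≤ 2 * y₀
      · refine ih y hy (hc.trans (mul_le_mul_of_nonneg_right ?_ (by linarith)))
        exact le_self_pow₀ (by norm_num) (by omega)
      · have h1 := ih (y / 2) (by linarith) (by rw [pow_succ] at hy2; linarith)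
        have h2 := hstep y (by linarith)
        have h3 := hratio y hy
        have h5 : ρ ≤ C * (1 - ρ / 4) := (div_le_iff₀ h4).1 hC1
        have hy2 : 0 ≤ y ^ 2 := sq_nonneg y
        calc V y ≤ C * (y / 2) ^ 2 * HZ p (y / 2) + y ^ 2 * HZ p (y / 2) := by linarith
          _ = (C / 4 + 1) * y ^ 2 * HZ p (y / 2) := by ring
          _ ≤ (C / 4 + 1) * y ^ 2 * (ρ * HZ p y) :=
            mul_le_mul_of_nonneg_left h3 (by positivity)
          _ = (C * (ρ / 4) + ρ) * (y ^ 2 * HZ p y) := by ring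
          _ ≤ C * (y ^ 2 * HZ p y) :=
            mul_le_mul_of_nonneg_right (by linarith) (mul_nonneg hy2 (hHpos y).le)
          _ = C * y ^ 2 * HZ p y := by ring
  refine ⟨C, hC0, ?_⟩
  filter_upwards [eventually_ge_atTop y₀] with y hy
  obtain ⟨k, hk⟩ := pow_unbounded_of_one_lt y (by norm_num : (1 : ℝ) < 2)
  refine hind k y hy (hk.le.trans ?_)
  rw [pow_succ]
  have : (0 : ℝ) < 2 ^ k := by positivity
  nlinarith

lemma FbarZ_ratio {p : ℤ → ℝ} {α q : ℝ} (hHpos : ∀ y, 0 < HZ p y)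
    (hH : ∀ l : ℝ, 0 < l →
      Tendsto (fun x : ℝ => HZ p (l * x) / HZ p x) atTop (nhds (l ^ (-α))))
    (hq : 0 < q) (hFq : Tendsto (fun x : ℝ => FbarZ p x / HZ p x) atTop (nhds q))
    {l : ℝ} (hl : 0 < l) :
    Tendsto (fun x : ℝ => FbarZ p (l * x) / FbarZ p x) atTop (nhds (l ^ (-α))) := by
  have h1 : Tendsto (fun x : ℝ => FbarZ p (l * x) / HZ p (l * x)) atTop (nhds q) :=
    hFq.comp (tendsto_id.const_mul_atTop hl)
  have h2 := (h1.mul (hH l hl)).div hFq hq.ne'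
  rw [mul_div_cancel_left₀ _ hq.ne'] at h2
  refine h2.congr fun x => ?_
  have a1 := (hHpos x).ne'
  have a2 := (hHpos (l * x)).ne'
  simp only [Pi.div_apply]
  field_simp

/-! ### The tilted law as a finite sum -/

lemma tsum_trunc (y : ℝ) (f : ℤ → ℝ) (hf : ∀ z : ℤ, ¬ |(z : ℝ)| ≤ y → f z = 0) :
    ∑' z, f z = ∑ z ∈ truncSet y, f z :=
  tsum_eq_sum fun z hz => hf z fun h => hz (mem_truncSet.2 h)

lemma tiltPmf_eq {p : ℤ → ℝ} {γ : ℝ} {n : ℕ} {x z : ℤ} (hz : z ∈ truncSet (γ * x)) :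
    tiltPmf p γ n x z = Real.exp (tiltMu p γ n x * z) * p z / tiltM0 p γ n x :=
  if_pos (mem_truncSet.1 hz)

lemma tiltM0_eq (p : ℤ → ℝ) (γ : ℝ) (n : ℕ) (x : ℤ) :
    tiltM0 p γ n x = ∑ z ∈ truncSet (γ * x), Real.exp (tiltMu p γ n x * z) * p z := by
  unfold tiltM0
  rw [tsum_trunc (γ * x) _ fun z hz => if_neg hz]
  exact Finset.sum_congr rfl fun z hz => if_pos (mem_truncSet.1 hz)

lemma tiltMean_eq (p : ℤ → ℝ) (γ : ℝ) (n : ℕ) (x : ℤ) :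
    tiltMean p γ n x = ∑ z ∈ truncSet (γ * x), (z : ℝ) * tiltPmf p γ n x z :=
  tsum_trunc _ _ fun z hz => by rw [tiltPmf, if_neg hz, mul_zero]

lemma tiltVar_eq (p : ℤ → ℝ) (γ : ℝ) (n : ℕ) (x : ℤ) :
    tiltVar p γ n x = ∑ z ∈ truncSet (γ * x),
      |(z : ℝ) - tiltMean p γ n x| ^ 2 * tiltPmf p γ n x z := by
  simp only [sq_abs]
  exact tsum_trunc _ _ fun z hz => by rw [tiltPmf, if_neg hz, mul_zero]

lemma tiltThird_eq (p : ℤ → ℝ) (γ : ℝ) (n : ℕ) (x : ℤ) :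
    tiltThird p γ n x = ∑ z ∈ truncSet (γ * x),
      |(z : ℝ) - tiltMean p γ n x| ^ 3 * tiltPmf p γ n x z :=
  tsum_trunc _ _ fun z hz => by rw [tiltPmf, if_neg hz, mul_zero]

lemma exp_tilt_eq {p : ℤ → ℝ} {γ : ℝ} {n : ℕ} {x : ℤ} (hy : 0 < γ * (x : ℝ))
    (hΛ : 1 ≤ tiltLambda p n x) (s : ℝ) :
    Real.exp (tiltMu p γ n x * (s * (γ * x))) = tiltLambda p n x ^ s := by
  rw [Real.rpow_def_of_pos (by linarith), tiltMu]
  congr 1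
  rw [mul_left_comm, div_mul_cancel₀ _ hy.ne', mul_comm]

lemma tiltMu_nonneg {p : ℤ → ℝ} {γ : ℝ} {n : ℕ} {x : ℤ} (hy : 0 < γ * (x : ℝ))
    (hΛ : 1 ≤ tiltLambda p n x) : 0 ≤ tiltMu p γ n x :=
  div_nonneg (Real.log_nonneg hΛ) hy.le

lemma exp_tilt_le {p : ℤ → ℝ} {γ : ℝ} {n : ℕ} {x z : ℤ} (hy : 0 < γ * (x : ℝ))
    (hΛ : 1 ≤ tiltLambda p n x) {s : ℝ} (hz : (z : ℝ) ≤ s * (γ * x)) :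
    Real.exp (tiltMu p γ n x * z) ≤ tiltLambda p n x ^ s := by
  rw [← exp_tilt_eq hy hΛ]
  exact Real.exp_le_exp.2 (mul_le_mul_of_nonneg_left hz (tiltMu_nonneg hy hΛ))

lemma le_exp_tilt {p : ℤ → ℝ} {γ : ℝ} {n : ℕ} {x z : ℤ} (hy : 0 < γ * (x : ℝ))
    (hΛ : 1 ≤ tiltLambda p n x) {s : ℝ} (hz : s * (γ * x) ≤ (z : ℝ)) :
    tiltLambda p n x ^ s ≤ Real.exp (tiltMu p γ n x * z) := by
  rw [← exp_tilt_eq hy hΛ]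
  exact Real.exp_le_exp.2 (mul_le_mul_of_nonneg_left hz (tiltMu_nonneg hy hΛ))

lemma le_tiltM0 {p : ℤ → ℝ} (hp0 : ∀ z, 0 ≤ p z) {γ : ℝ} {n : ℕ} {x z₀ : ℤ}
    (hy : 0 < γ * (x : ℝ)) (hΛ : 1 ≤ tiltLambda p n x) (hz0 : 0 ≤ z₀)
    (hz : (z₀ : ℝ) ≤ γ * x) : p z₀ ≤ tiltM0 p γ n x := by
  have hz0' : (0 : ℝ) ≤ z₀ := by exact_mod_cast hz0
  rw [tiltM0_eq]
  refine le_trans ?_ (Finset.single_le_sum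
    (f := fun z : ℤ => Real.exp (tiltMu p γ n x * z) * p z)
    (fun z _ => mul_nonneg (Real.exp_pos _).le (hp0 z))
    (mem_truncSet.2 (by rwa [abs_of_nonneg hz0'])))
  exact le_mul_of_one_le_left (hp0 _)
    (Real.one_le_exp (mul_nonneg (tiltMu_nonneg hy hΛ) hz0'))

lemma tiltPmf_nonneg {p : ℤ → ℝ} (hp0 : ∀ z, 0 ≤ p z) {γ : ℝ} {n : ℕ} {x : ℤ}
    (hM : 0 < tiltM0 p γ n x) (z : ℤ) : 0 ≤ tiltPmf p γ n x z := by
  unfold tiltPmf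
  split_ifs
  · exact div_nonneg (mul_nonneg (Real.exp_pos _).le (hp0 z)) hM.le
  · exact le_rfl

lemma sum_tiltPmf {p : ℤ → ℝ} {γ : ℝ} {n : ℕ} {x : ℤ} (hM : 0 < tiltM0 p γ n x) :
    ∑ z ∈ truncSet (γ * x), tiltPmf p γ n x z = 1 := by
  rw [Finset.sum_congr rfl fun z hz => tiltPmf_eq hz, ← Finset.sum_div, ← tiltM0_eq]
  exact div_self hM.ne'

lemma abs_tiltMean_le {p : ℤ → ℝ} (hp0 : ∀ z, 0 ≤ p z) {γ : ℝ} {n : ℕ} {x : ℤ}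
    (hM : 0 < tiltM0 p γ n x) : |tiltMean p γ n x| ≤ γ * x := by
  rw [tiltMean_eq]
  refine (Finset.abs_sum_le_sum_abs _ _).trans ?_
  calc ∑ z ∈ truncSet (γ * x), |(z : ℝ) * tiltPmf p γ n x z|
      ≤ ∑ z ∈ truncSet (γ * x), γ * x * tiltPmf p γ n x z := by
        refine Finset.sum_le_sum fun z hz => ?_
        rw [abs_mul, abs_of_nonneg (tiltPmf_nonneg hp0 hM z)]
        exact mul_le_mul_of_nonneg_right (mem_truncSet.1 hz) (tiltPmf_nonneg hp0 hM z)
    _ = γ * x := by rw [← Finset.mul_sum, sum_tiltPmf hM, mul_one]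

/-! ### Moment bounds at a fixed pair `(n, x)` -/

lemma tiltVar_le_second_moment {p : ℤ → ℝ} {γ : ℝ} {n : ℕ} {x : ℤ}
    (hM : 0 < tiltM0 p γ n x) :
    tiltVar p γ n x ≤ ∑ z ∈ truncSet (γ * x), (z : ℝ) ^ 2 * tiltPmf p γ n x z := by
  have h : tiltVar p γ n x = ∑ z ∈ truncSet (γ * x), (z : ℝ) ^ 2 * tiltPmf p γ n x z
      - tiltMean p γ n x ^ 2 := by
    rw [tiltVar_eq]
    have : ∀ z ∈ truncSet (γ * x), |(z : ℝ) - tiltMean p γ n x| ^ 2 * tiltPmf p γ n x z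
        = (z : ℝ) ^ 2 * tiltPmf p γ n x z
          - 2 * tiltMean p γ n x * ((z : ℝ) * tiltPmf p γ n x z)
          + tiltMean p γ n x ^ 2 * tiltPmf p γ n x z := by
      intro z _
      rw [sq_abs]; ring
    rw [Finset.sum_congr rfl this, Finset.sum_add_distrib, Finset.sum_sub_distrib,
      ← Finset.mul_sum, ← Finset.mul_sum, sum_tiltPmf hM, ← tiltMean_eq]
    ring
  rw [h]
  linarith [sq_nonneg (tiltMean p γ n x)]

lemma tiltVar_upper {p : ℤ → ℝ} (hp0 : ∀ z, 0 ≤ p z) {γ : ℝ} {n : ℕ} {x : ℤ} {b C : ℝ}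
    (hy : 0 < γ * (x : ℝ)) (hΛ : 1 ≤ tiltLambda p n x) (hb : 0 < b)
    (hbM : b ≤ tiltM0 p γ n x) (hnΛ : n * FbarZ p x * tiltLambda p n x = 1)
    (hC : ∑ z ∈ truncSet (γ * x), (z : ℝ) ^ 2 * p z ≤ C * (x : ℝ) ^ 2 * FbarZ p x) :
    n * tiltVar p γ n x ≤ C / b * (x : ℝ) ^ 2 := by
  have hM : 0 < tiltM0 p γ n x := hb.trans_le hbM
  have hΛ0 : 0 < tiltLambda p n x := by linarith
  have hmom : ∑ z ∈ truncSet (γ * x), (z : ℝ) ^ 2 * tiltPmf p γ n x z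
      ≤ tiltLambda p n x / b * ∑ z ∈ truncSet (γ * x), (z : ℝ) ^ 2 * p z := by
    rw [Finset.mul_sum]
    refine Finset.sum_le_sum fun z hz => ?_
    rw [tiltPmf_eq hz]
    have he : Real.exp (tiltMu p γ n x * z) ≤ tiltLambda p n x := by
      have := exp_tilt_le (s := 1) hy hΛ
        (by rw [one_mul]; exact (le_abs_self _).trans (mem_truncSet.1 hz))
      rwa [Real.rpow_one] at this
    have hzz : 0 ≤ (z : ℝ) ^ 2 * p z := mul_nonneg (sq_nonneg _) (hp0 z)
    calc (z : ℝ) ^ 2 * (Real.exp (tiltMu p γ n x * z) * p z / tiltM0 p γ n x)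
        = Real.exp (tiltMu p γ n x * z) / tiltM0 p γ n x * ((z : ℝ) ^ 2 * p z) := by ring
      _ ≤ tiltLambda p n x / b * ((z : ℝ) ^ 2 * p z) := by gcongr
  calc n * tiltVar p γ n x
      ≤ n * (tiltLambda p n x / b * (C * (x : ℝ) ^ 2 * FbarZ p x)) := by
        refine mul_le_mul_of_nonneg_left ?_ (Nat.cast_nonneg n)
        exact (tiltVar_le_second_moment hM).trans
          (hmom.trans (mul_le_mul_of_nonneg_left hC (by positivity)))
    _ = C / b * (x : ℝ) ^ 2 * (n * FbarZ p x * tiltLambda p n x) := by ring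
    _ = C / b * (x : ℝ) ^ 2 := by rw [hnΛ, mul_one]

lemma tiltThird_le {p : ℤ → ℝ} (hp0 : ∀ z, 0 ≤ p z) {γ : ℝ} {n : ℕ} {x : ℤ}
    (hM : 0 < tiltM0 p γ n x) : tiltThird p γ n x ≤ 2 * (γ * x) * tiltVar p γ n x := by
  rw [tiltThird_eq, tiltVar_eq, Finset.mul_sum]
  refine Finset.sum_le_sum fun z hz => ?_
  have h1 : |(z : ℝ) - tiltMean p γ n x| ≤ 2 * (γ * x) := by
    have := abs_sub (z : ℝ) (tiltMean p γ n x)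
    linarith [mem_truncSet.1 hz, abs_tiltMean_le hp0 hM]
  rw [pow_succ', mul_assoc]
  exact mul_le_mul_of_nonneg_right h1 (mul_nonneg (by positivity) (tiltPmf_nonneg hp0 hM z))

/-- A crude bound on the normalisation: the part `z ≤ ε γ x` has tilt at most `Λ ^ ε`, and the
part `z > ε γ x` has tilt at most `Λ` and mass of order `F̄(x) = 1 / (n Λ)`. -/
lemma tiltM0_le {p : ℤ → ℝ} (hp0 : ∀ z, 0 ≤ p z) (hp1 : HasSum p 1) {γ : ℝ} {n : ℕ} {x : ℤ}
    {ε C : ℝ} (hε : 0 < ε) (hy : 0 < γ * (x : ℝ)) (hΛ : 1 ≤ tiltLambda p n x)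
    (hn : 1 ≤ n) (hC0 : 0 ≤ C) (hnΛ : n * FbarZ p x * tiltLambda p n x = 1)
    (hC : FbarZ p (ε * (γ * x)) ≤ C * FbarZ p x) :
    tiltM0 p γ n x ≤ (1 + C) * tiltLambda p n x ^ ε := by
  have hΛ0 : 0 < tiltLambda p n x := by linarith
  have hn' : (1 : ℝ) ≤ n := by exact_mod_cast hn
  have hΛε : 1 ≤ tiltLambda p n x ^ ε := Real.one_le_rpow hΛ hε.le
  rw [tiltM0_eq, ← Finset.sum_filter_add_sum_filter_not (truncSet (γ * x))
    (fun z : ℤ => ε * (γ * x) < (z : ℝ))]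
  have hA : ∑ z ∈ (truncSet (γ * x)).filter (fun z : ℤ => ε * (γ * x) < (z : ℝ)),
      Real.exp (tiltMu p γ n x * z) * p z ≤ C := by
    calc _ ≤ ∑ z ∈ (truncSet (γ * x)).filter (fun z : ℤ => ε * (γ * x) < (z : ℝ)),
          tiltLambda p n x * p z := by
            refine Finset.sum_le_sum fun z hz => mul_le_mul_of_nonneg_right ?_ (hp0 z)
            have := exp_tilt_le (s := 1) hy hΛ (by
              rw [one_mul]
              exact (le_abs_self _).trans (mem_truncSet.1 (Finset.mem_filter.1 hz).1))
            rwa [Real.rpow_one] at this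
      _ ≤ tiltLambda p n x * (C * FbarZ p x) := by
            rw [← Finset.mul_sum]
            exact mul_le_mul_of_nonneg_left
              ((sum_filter_le_FbarZ hp0 hp1 _ _).trans hC) hΛ0.le
      _ = C * (FbarZ p x * tiltLambda p n x) := by ring
      _ ≤ C * 1 := by
            refine mul_le_mul_of_nonneg_left ?_ hC0
            have h : FbarZ p x * tiltLambda p n x = 1 / n := by
              rw [eq_div_iff (by positivity)]; linarith
            rw [h]
            exact (div_le_one (by positivity)).2 hn'
      _ = C := mul_one C
  have hB : ∑ z ∈ (truncSet (γ * x)).filter (fun z : ℤ => ¬ ε * (γ * x) < (z : ℝ)),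
      Real.exp (tiltMu p γ n x * z) * p z ≤ tiltLambda p n x ^ ε := by
    calc _ ≤ ∑ z ∈ (truncSet (γ * x)).filter (fun z : ℤ => ¬ ε * (γ * x) < (z : ℝ)),
          tiltLambda p n x ^ ε * p z :=
            Finset.sum_le_sum fun z hz => mul_le_mul_of_nonneg_right
              (exp_tilt_le hy hΛ (not_lt.1 (Finset.mem_filter.1 hz).2)) (hp0 z)
      _ ≤ tiltLambda p n x ^ ε * 1 := by
            rw [← Finset.mul_sum]
            exact mul_le_mul_of_nonneg_left
              (sum_le_hasSum _ (fun z _ => hp0 z) hp1) (by positivity)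
      _ = _ := mul_one _
  nlinarith

/-- Contribution to the `k`-th absolute moment about `m` of a block `(u γ x, v γ x]` all of whose
points are at distance at least `D` from `m`. -/
lemma block_lower {p : ℤ → ℝ} (hp0 : ∀ z, 0 ≤ p z) (hp1 : HasSum p 1) {γ : ℝ} {n : ℕ} {x : ℤ}
    {u v s D m c B : ℝ} (k : ℕ) (hy : 0 < γ * (x : ℝ)) (hΛ : 1 ≤ tiltLambda p n x)
    (hM : 0 < tiltM0 p γ n x) (hB : tiltM0 p γ n x ≤ B)
    (hs : 0 ≤ s) (hsu : s ≤ u) (huv : u ≤ v) (hv : v ≤ 1) (hD : 0 ≤ D)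
    (hdist : ∀ z : ℤ, u * (γ * x) < z → (z : ℝ) ≤ v * (γ * x) → D ≤ |(z : ℝ) - m|)
    (hc : c ≤ FbarZ p (u * (γ * x)) - FbarZ p (v * (γ * x))) :
    D ^ k * (tiltLambda p n x ^ s / B * c)
      ≤ ∑ z ∈ truncSet (γ * x), |(z : ℝ) - m| ^ k * tiltPmf p γ n x z := by
  have hΛ0 : 0 < tiltLambda p n x := by linarith
  have hB0 : 0 < B := hM.trans_le hB
  rw [FbarZ_sub hp0 hp1 (mul_nonneg (hs.trans hsu) hy.le)
    (mul_le_mul_of_nonneg_right huv hy.le) (mul_le_of_le_one_left hy.le hv)] at hc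
  refine le_trans ?_ (Finset.sum_le_sum_of_subset_of_nonneg (Finset.filter_subset
    (fun z : ℤ => u * (γ * x) < (z : ℝ) ∧ (z : ℝ) ≤ v * (γ * x)) (truncSet (γ * x)))
    fun z _ _ => mul_nonneg (by positivity) (tiltPmf_nonneg hp0 hM z))
  calc D ^ k * (tiltLambda p n x ^ s / B * c)
      ≤ D ^ k * (tiltLambda p n x ^ s / B * ∑ z ∈ (truncSet (γ * x)).filter
          (fun z : ℤ => u * (γ * x) < (z : ℝ) ∧ (z : ℝ) ≤ v * (γ * x)), p z) := by gcongr
    _ ≤ _ := by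
      rw [Finset.mul_sum, Finset.mul_sum]
      refine Finset.sum_le_sum fun z hz => ?_
      obtain ⟨hz1, hz2, hz3⟩ := Finset.mem_filter.1 hz
      rw [tiltPmf_eq hz1]
      have h1 := hdist z hz2 hz3
      have h2 : tiltLambda p n x ^ s ≤ Real.exp (tiltMu p γ n x * z) :=
        le_exp_tilt hy hΛ ((mul_le_mul_of_nonneg_right hsu hy.le).trans hz2.le)
      have h3 := hp0 z
      calc D ^ k * (tiltLambda p n x ^ s / B * p z)
          ≤ |(z : ℝ) - m| ^ k * (Real.exp (tiltMu p γ n x * z) / tiltM0 p γ n x * p z) := by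
            gcongr
        _ = _ := by ring

/-- Lower bound for the `k`-th absolute moment about an arbitrary centre `m`: one of the two
separated blocks near the right end of the truncation window is far from `m`. -/
lemma moment_lower {p : ℤ → ℝ} (hp0 : ∀ z, 0 ≤ p z) (hp1 : HasSum p 1) {γ : ℝ} {n : ℕ} {x : ℤ}
    {ε C c m : ℝ} (k : ℕ) (hε : 0 < ε) (hε4 : 4 * ε < 1)
    (hy : 0 < γ * (x : ℝ)) (hΛ : 1 ≤ tiltLambda p n x) (hn : 1 ≤ n) (hC0 : 0 ≤ C)
    (hnΛ : n * FbarZ p x * tiltLambda p n x = 1) (hM : 0 < tiltM0 p γ n x)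
    (hC : FbarZ p (ε * (γ * x)) ≤ C * FbarZ p x)
    (hc1 : c * FbarZ p x ≤ FbarZ p ((1 - ε) * (γ * x)) - FbarZ p (1 * (γ * x)))
    (hc2 : c * FbarZ p x
      ≤ FbarZ p ((1 - 3 * ε) * (γ * x)) - FbarZ p ((1 - 2 * ε) * (γ * x))) :
    (ε * γ / 2) ^ k * (c / (1 + C)) * (x : ℝ) ^ k / tiltLambda p n x ^ (4 * ε)
      ≤ n * ∑ z ∈ truncSet (γ * x), |(z : ℝ) - m| ^ k * tiltPmf p γ n x z := by
  have hΛ0 : 0 < tiltLambda p n x := by linarith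
  have hB := tiltM0_le hp0 hp1 hε hy hΛ hn hC0 hnΛ hC
  have hεy : 0 < ε * (γ * x) := mul_pos hε hy
  have key : (ε * (γ * x) / 2) ^ k * (tiltLambda p n x ^ (1 - 3 * ε)
      / ((1 + C) * tiltLambda p n x ^ ε) * (c * FbarZ p x))
      ≤ ∑ z ∈ truncSet (γ * x), |(z : ℝ) - m| ^ k * tiltPmf p γ n x z := by
    by_cases hm : m ≤ (1 - 3 / 2 * ε) * (γ * x)
    · refine block_lower hp0 hp1 k hy hΛ hM hB (u := 1 - ε) (v := 1) (by linarith) (by linarith)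
        (by linarith) le_rfl (by positivity) (fun z hz _ => ?_) hc1
      refine le_trans ?_ (le_abs_self _)
      nlinarith
    · refine block_lower hp0 hp1 k hy hΛ hM hB (u := 1 - 3 * ε) (v := 1 - 2 * ε) (by linarith)
        le_rfl (by linarith) (by linarith) (by positivity) (fun z _ hz => ?_) hc2
      rw [abs_sub_comm]
      refine le_trans ?_ (le_abs_self _)
      nlinarith
  refine le_trans (le_of_eq ?_) (mul_le_mul_of_nonneg_left key (Nat.cast_nonneg n))
  have hpow : tiltLambda p n x ^ (1 - 3 * ε) * tiltLambda p n x ^ (4 * ε)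
      = tiltLambda p n x * tiltLambda p n x ^ ε := by
    rw [← Real.rpow_add hΛ0]
    nth_rewrite 2 [← Real.rpow_one (tiltLambda p n x)]
    rw [← Real.rpow_add hΛ0]
    congr 1
    ring
  have h4 : 0 < tiltLambda p n x ^ (4 * ε) := by positivity
  have h1 : 0 < tiltLambda p n x ^ ε := by positivity
  have hC1 : 0 < 1 + C := by linarith
  rw [div_eq_iff h4.ne']
  have e1 : (ε * (γ * x) / 2) ^ k = (ε * γ / 2) ^ k * (x : ℝ) ^ k := by
    rw [← mul_pow]; congr 1; ring
  rw [e1]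
  calc (ε * γ / 2) ^ k * (c / (1 + C)) * (x : ℝ) ^ k
      = (ε * γ / 2) ^ k * (x : ℝ) ^ k * (c / (1 + C)) * (n * FbarZ p x * tiltLambda p n x) := by
        rw [hnΛ]; ring
    _ = (ε * γ / 2) ^ k * (x : ℝ) ^ k * (c / (1 + C)) * (n * FbarZ p x)
          * ((tiltLambda p n x * tiltLambda p n x ^ ε) / tiltLambda p n x ^ ε) := by
        rw [mul_div_cancel_right₀ _ h1.ne']; ring
    _ = _ := by
        rw [← hpow]
        field_simp

/-! ### Uniformity in `n` and `x` -/

/-- for fixed `γ > 0` and `d ∈ (0,1)` there are `c₁,c₂,c₃,c₄ > 0`, `n₀` and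
`θ₀ > 0` such that for all `n ≥ n₀` and integers `x ≥ θ₀·aₙ`:
`c₁·x² ≥ n·σ̃² ≥ c₂·x²/Λ^d` and `c₃·x³ ≥ n·ν̃ ≥ c₄·x³/Λ^d`. -/
theorem tilted_variance_bounds (p : ℤ → ℝ) (α q : ℝ) (a : ℕ → ℝ) (γ d : ℝ)
    (hp0 : ∀ z, 0 ≤ p z) (hp1 : HasSum p 1)
    (hap : ∀ c d' : ℤ, (∀ z, p z ≠ 0 → d' ∣ (z - c)) → d' = 1 ∨ d' = -1)
    (hα : (0 < α ∧ α < 1) ∨ (1 < α ∧ α < 2))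
    (hH : ∀ l : ℝ, 0 < l →
      Tendsto (fun x : ℝ => HZ p (l * x) / HZ p x) atTop (nhds (l ^ (-α))))
    (hq : 0 < q) (hq1 : q ≤ 1)
    (hFq : Tendsto (fun x : ℝ => FbarZ p x / HZ p x) atTop (nhds q))
    (hmean : 1 < α → ∑' z : ℤ, (z : ℝ) * p z = 0)
    (ha : Tendsto a atTop atTop)
    (haH : Tendsto (fun n : ℕ => (n : ℝ) * HZ p (a n)) atTop (nhds 1))
    (hγ : 0 < γ) (hd : d ∈ Set.Ioo (0 : ℝ) 1) :
    ∃ c₁ : ℝ, 0 < c₁ ∧ ∃ c₂ : ℝ, 0 < c₂ ∧ ∃ c₃ : ℝ, 0 < c₃ ∧ ∃ c₄ : ℝ, 0 < c₄ ∧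
      ∃ n₀ : ℕ, ∃ θ₀ : ℝ, 0 < θ₀ ∧
        ∀ n : ℕ, n₀ ≤ n → ∀ x : ℤ, θ₀ * a n ≤ (x : ℝ) →
          (n : ℝ) * tiltVar p γ n x ≤ c₁ * (x : ℝ) ^ 2 ∧
          c₂ * (x : ℝ) ^ 2 / (tiltLambda p n x) ^ (d : ℝ) ≤ (n : ℝ) * tiltVar p γ n x ∧
          (n : ℝ) * tiltThird p γ n x ≤ c₃ * (x : ℝ) ^ 3 ∧
          c₄ * (x : ℝ) ^ 3 / (tiltLambda p n x) ^ (d : ℝ) ≤ (n : ℝ) * tiltThird p γ n x := by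
  have hα0 : 0 < α := by rcases hα with h | h <;> linarith [h.1]
  have hα2 : α < 2 := by rcases hα with h | h <;> linarith [h.2]
  have hHpos := HZ_pos hp0 hp1 hH
  have hFr := fun (l : ℝ) (hl : 0 < l) => FbarZ_ratio hHpos hH hq hFq hl
  obtain ⟨hd0, hd1⟩ := hd
  obtain ⟨ε, hεd⟩ : ∃ ε, 4 * ε = d := ⟨d / 4, by ring⟩
  have hε : 0 < ε := by linarith
  -- Tail comparisons, valid for all large real arguments.
  have hFH : ∀ᶠ y : ℝ in atTop, q / 2 * HZ p y ≤ FbarZ p y := by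
    filter_upwards [hFq.eventually_const_lt (half_lt_self hq)] with y hy
    exact ((lt_div_iff₀ (hHpos y)).1 hy).le
  have hFpos : ∀ᶠ y : ℝ in atTop, 0 < FbarZ p y := by
    filter_upwards [hFH] with y hy
    exact lt_of_lt_of_le (mul_pos (half_pos hq) (hHpos y)) hy
  obtain ⟨C, hC0, hCev⟩ := truncated_second_moment hp0 hp1 hα2 hH
  obtain ⟨A, hA⟩ : ∃ A, A = γ ^ (-α) + 1 := ⟨_, rfl⟩
  have hA0 : 0 < A := by rw [hA]; positivity
  have hsecond : ∀ᶠ y : ℝ in atTop, ∑ z ∈ truncSet (γ * y), (z : ℝ) ^ 2 * p z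
      ≤ C * γ ^ 2 * A * (2 / q) * y ^ 2 * FbarZ p y := by
    filter_upwards [(tendsto_id.const_mul_atTop hγ).eventually hCev, hFH,
      (hH γ hγ).eventually_lt_const (show γ ^ (-α) < A by rw [hA]; linarith)] with y h1 h2 h3
    have h3' : HZ p (γ * y) ≤ A * HZ p y := ((div_lt_iff₀ (hHpos y)).1 h3).le
    have h2' : HZ p y ≤ 2 / q * FbarZ p y := by
      rw [div_mul_eq_mul_div, le_div_iff₀ hq]; linarith
    calc _ ≤ C * (γ * y) ^ 2 * HZ p (γ * y) := h1
      _ ≤ C * (γ * y) ^ 2 * (A * (2 / q * FbarZ p y)) := by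
        refine mul_le_mul_of_nonneg_left (h3'.trans ?_) (by positivity)
        exact mul_le_mul_of_nonneg_left h2' hA0.le
      _ = _ := by ring
  obtain ⟨K, hK⟩ : ∃ K, K = (ε * γ) ^ (-α) + 1 := ⟨_, rfl⟩
  have hK0 : 0 ≤ K := by rw [hK]; positivity
  have hmass : ∀ᶠ y : ℝ in atTop, FbarZ p (ε * (γ * y)) ≤ K * FbarZ p y := by
    filter_upwards [hFpos, (hFr (ε * γ) (by positivity)).eventually_lt_const
      (show (ε * γ) ^ (-α) < K by rw [hK]; linarith)] with y h1 h2
    rw [← mul_assoc]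
    exact ((div_lt_iff₀ h1).1 h2).le
  have hblock : ∀ u v : ℝ, 0 < u → u < v → ∃ c : ℝ, 0 < c ∧ ∀ᶠ y : ℝ in atTop,
      c * FbarZ p y ≤ FbarZ p (u * (γ * y)) - FbarZ p (v * (γ * y)) := by
    intro u v hu huv
    have hpos : 0 < (u * γ) ^ (-α) - (v * γ) ^ (-α) :=
      sub_pos.2 (Real.rpow_lt_rpow_of_neg (by positivity) (by gcongr) (by linarith))
    refine ⟨_, half_pos hpos, ?_⟩
    filter_upwards [hFpos, ((hFr (u * γ) (by positivity)).sub
      (hFr (v * γ) (mul_pos (hu.trans huv) hγ))).eventually_const_lt (half_lt_self hpos)]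
      with y h1 h2
    rw [← sub_div, lt_div_iff₀ h1] at h2
    rw [← mul_assoc, ← mul_assoc]
    exact h2.le
  obtain ⟨b₁, hb₁, hbl₁⟩ := hblock (1 - ε) 1 (by linarith) (by linarith)
  obtain ⟨b₂, hb₂, hbl₂⟩ := hblock (1 - 3 * ε) (1 - 2 * ε) (by linarith) (by linarith)
  obtain ⟨c, hc⟩ : ∃ c, c = min b₁ b₂ := ⟨_, rfl⟩
  have hc0 : 0 < c := hc ▸ lt_min hb₁ hb₂
  -- A positive atom, which bounds `m₀` below.
  obtain ⟨z₀, hz₀, hpz₀⟩ : ∃ z₀ : ℤ, 0 ≤ z₀ ∧ 0 < p z₀ := by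
    obtain ⟨y, hy0, hyF⟩ := ((eventually_ge_atTop (0 : ℝ)).and hFpos).exists
    by_contra! hcon
    refine hyF.ne' ?_
    unfold FbarZ
    refine (tsum_congr fun z => ?_).trans tsum_zero
    split_ifs with h
    · exact le_antisymm (hcon z (by exact_mod_cast (hy0.trans h.le))) (hp0 z)
    · rfl
  obtain ⟨X₀, hX₀⟩ := eventually_atTop.1 (hFpos.and (hsecond.and (hmass.and (hbl₁.and (hbl₂.and
    ((eventually_gt_atTop (0 : ℝ)).and
      ((tendsto_id.const_mul_atTop hγ).eventually_ge_atTop (z₀ : ℝ))))))))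
  -- For `x ≥ 2 aₙ` the quantity `n F̄(x)` is eventually at most `1`.
  have hnH : ∀ᶠ n : ℕ in atTop, (n : ℝ) * HZ p (2 * a n) < 1 := by
    have h1 : Tendsto (fun n : ℕ => (n : ℝ) * HZ p (2 * a n)) atTop (nhds (1 * 2 ^ (-α))) := by
      refine (haH.mul ((hH 2 two_pos).comp ha)).congr fun n => ?_
      have := (hHpos (a n)).ne'
      simp only [Function.comp]
      field_simp
    refine h1.eventually_lt_const ?_
    rw [one_mul]
    exact Real.rpow_lt_one_of_one_lt_of_neg (by norm_num) (by linarith)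
  obtain ⟨n₀, hn₀⟩ := eventually_atTop.1 (hnH.and
    (((ha.const_mul_atTop (two_pos : (0 : ℝ) < 2)).eventually_ge_atTop X₀).and
      (eventually_ge_atTop 1)))
  refine ⟨C * γ ^ 2 * A * (2 / q) / p z₀, by positivity, (ε * γ / 2) ^ 2 * (c / (1 + K)),
    by positivity, 2 * γ * (C * γ ^ 2 * A * (2 / q) / p z₀), by positivity,
    (ε * γ / 2) ^ 3 * (c / (1 + K)), by positivity, n₀, 2, two_pos, ?_⟩
  intro n hn x hx
  obtain ⟨hn1, hn2, hn3⟩ := hn₀ n hn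
  obtain ⟨hF, h2, h3, h4, h5, hx0, h7⟩ := hX₀ x (hn2.trans hx)
  have hn3' : (1 : ℝ) ≤ n := by exact_mod_cast hn3
  have hnF : 0 < n * FbarZ p x := by positivity
  have hnΛ : n * FbarZ p x * tiltLambda p n x = 1 := mul_one_div_cancel hnF.ne'
  have hΛ : 1 ≤ tiltLambda p n x := by
    refine (one_le_div hnF).2 (le_trans ?_ hn1.le)
    exact mul_le_mul_of_nonneg_left
      ((FbarZ_le_HZ hp0 hp1 _).trans (HZ_antitone hp0 hp1 hx)) (Nat.cast_nonneg n)
  have hy : 0 < γ * (x : ℝ) := mul_pos hγ hx0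
  have hbM := le_tiltM0 (n := n) hp0 hy hΛ hz₀ h7
  have hM := hpz₀.trans_le hbM
  have hvar := tiltVar_upper hp0 hy hΛ hpz₀ hbM hnΛ h2
  have hc1 : c * FbarZ p x ≤ b₁ * FbarZ p x :=
    mul_le_mul_of_nonneg_right (hc ▸ min_le_left _ _) hF.le
  have hc2 : c * FbarZ p x ≤ b₂ * FbarZ p x :=
    mul_le_mul_of_nonneg_right (hc ▸ min_le_right _ _) hF.le
  have hlow := fun k : ℕ => moment_lower (m := tiltMean p γ n x) hp0 hp1 k hε (by linarith) hy hΛ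
    hn3 hK0 hnΛ hM h3 (hc1.trans h4) (hc2.trans h5)
  rw [hεd] at hlow
  refine ⟨hvar, tiltVar_eq p γ n x ▸ hlow 2, ?_, tiltThird_eq p γ n x ▸ hlow 3⟩
  calc n * tiltThird p γ n x ≤ n * (2 * (γ * x) * tiltVar p γ n x) :=
        mul_le_mul_of_nonneg_left (tiltThird_le hp0 hM) (Nat.cast_nonneg n)
    _ = 2 * (γ * x) * (n * tiltVar p γ n x) := by ring
    _ ≤ 2 * (γ * x) * (C * γ ^ 2 * A * (2 / q) / p z₀ * (x : ℝ) ^ 2) :=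
        mul_le_mul_of_nonneg_left hvar (by positivity)
    _ = _ := by ring
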